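/- Let M be a matroid of rank r on finite ground set E. Then Z^⊤_{M+e}(s) = (1/(s+1)) · ( Z^⊤_M(s) − s/((|E|+1)s + r) · Y_M(s) ), where M + e is the free extension of M. -/

import Mathlib

open scoped Classical
open Polynomial

/-- The unsigned Stirling number of the first kind `c(n,k)`: the number of
permutations of an `n`-element set with exactly `k` disjoint cycles
(fixed points count as cycles). -/
noncomputable def stirlingFirst (n k : ℕ) : ℕ :=
  (Finset.univ.filter fun σ : Equiv.Perm (Fin n) =>
    Multiset.card σ.cycleType + (n - σ.support.card) = k).card

/-- The Stirling number of the second kind `S(n,k)`: the number of partitions of an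
`n`-element set into exactly `k` nonempty parts. -/
noncomputable def stirlingSecond (n k : ℕ) : ℕ :=
  (Finset.univ.filter fun P : Finset (Finset (Fin n)) =>
    P.card = k ∧ ∅ ∉ P ∧ (P : Set (Finset (Fin n))).PairwiseDisjoint id ∧
      P.sup id = Finset.univ).card

/-- A matroid on a finite ground set `E`, presented by its rank function. -/
structure FinMatroid (α : Type*) [DecidableEq α] where
  E : Finset α
  rk : Finset α → ℕ
  rk_empty : rk ∅ = 0
  rk_le_card : ∀ S : Finset α, rk S ≤ S.card
  rk_mono : ∀ ⦃S T : Finset α⦄, S ⊆ T → rk S ≤ rk T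
  rk_submod : ∀ S T : Finset α, rk (S ∪ T) + rk (S ∩ T) ≤ rk S + rk T

namespace FinMatroid

variable {α : Type*} [DecidableEq α]

/-- A flat of a matroid: a subset of the ground set such that adding any new element
of the ground set increases the rank. -/
def IsFlat (M : FinMatroid α) (F : Finset α) : Prop :=
  F ⊆ M.E ∧ ∀ x ∈ M.E, x ∉ F → M.rk F < M.rk (insert x F)

/-- The lattice of flats `L(M)`, as a finset. -/
noncomputable def flats (M : FinMatroid α) : Finset (Finset α) :=
  M.E.powerset.filter fun F => M.IsFlat F

/-- The proper flats, i.e. flats different from the ground set. -/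
noncomputable def properFlats (M : FinMatroid α) : Finset (Finset α) :=
  M.flats.filter fun F => F ≠ M.E

/-- A matroid is loopless if every singleton of the ground set has rank one. -/
def Loopless (M : FinMatroid α) : Prop := ∀ x ∈ M.E, M.rk {x} = 1

/-- The restriction `M|F` of a matroid to a subset of its ground set. -/
def restrict (M : FinMatroid α) (F : Finset α) : FinMatroid α :=
  ⟨F, M.rk, M.rk_empty, M.rk_le_card, M.rk_mono, M.rk_submod⟩

/-- The characteristic polynomial attached to a ground set and a rank function:
`χ(q) = ∑_{S ⊆ E} (-1)^{|S|} q^{rk E - rk S}`. -/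
noncomputable def charPolyAux (E : Finset α) (rk : Finset α → ℕ) : Polynomial ℚ :=
  ∑ S ∈ E.powerset, (-1 : Polynomial ℚ) ^ S.card * X ^ (rk E - rk S)

/-- The characteristic polynomial `χ_M(q)` of a matroid. -/
noncomputable def charPoly (M : FinMatroid α) : Polynomial ℚ := charPolyAux M.E M.rk

/-- The characteristic polynomial `χ_{M/F}(q)` of the contraction of `M` at `F`. -/
noncomputable def contractCharPoly (M : FinMatroid α) (F : Finset α) : Polynomial ℚ :=
  charPolyAux (M.E \ F) fun S => M.rk (S ∪ F) - M.rk F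

/-- The reduced characteristic polynomial `χ̄(q) = χ(q)/(q-1)`. -/
noncomputable def reducedCharPoly (p : Polynomial ℚ) : Polynomial ℚ := p /ₘ (X - C 1)

/-- The value `χ̄_{M/F}(1)` of the reduced characteristic polynomial of `M/F` at `q = 1`. -/
noncomputable def redCharContractOne (M : FinMatroid α) (F : Finset α) : ℚ :=
  (reducedCharPoly (M.contractCharPoly F)).eval 1

/-- The truncation `tr(M)`, with rank function `S ↦ min (rk S) (rk M - 1)`. -/
def truncation (M : FinMatroid α) : FinMatroid α where
  E := M.E
  rk S := min (M.rk S) (M.rk M.E - 1)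
  rk_empty := by simp [M.rk_empty]
  rk_le_card S := le_trans (min_le_left _ _) (M.rk_le_card S)
  rk_mono S T h := min_le_min (M.rk_mono h) le_rfl
  rk_submod S T := by
    have h1 := M.rk_submod S T
    have h2 : M.rk S ≤ M.rk (S ∪ T) := M.rk_mono Finset.subset_union_left
    have h3 : M.rk T ≤ M.rk (S ∪ T) := M.rk_mono Finset.subset_union_right
    have h4 : M.rk (S ∩ T) ≤ M.rk S := M.rk_mono Finset.inter_subset_left
    simp only [Nat.min_def]
    split_ifs <;> omega

/-- The direct sum `M₁ ⊕ M₂` of two matroids on disjoint ground sets. -/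
def directSum (M₁ M₂ : FinMatroid α) (h : Disjoint M₁.E M₂.E) : FinMatroid α where
  E := M₁.E ∪ M₂.E
  rk S := M₁.rk (S ∩ M₁.E) + M₂.rk (S ∩ M₂.E)
  rk_empty := by simp [M₁.rk_empty, M₂.rk_empty]
  rk_le_card S := by
    have hd : Disjoint (S ∩ M₁.E) (S ∩ M₂.E) :=
      h.mono Finset.inter_subset_right Finset.inter_subset_right
    calc M₁.rk (S ∩ M₁.E) + M₂.rk (S ∩ M₂.E)
        ≤ (S ∩ M₁.E).card + (S ∩ M₂.E).card :=
          add_le_add (M₁.rk_le_card _) (M₂.rk_le_card _)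
      _ = ((S ∩ M₁.E) ∪ (S ∩ M₂.E)).card := (Finset.card_union_of_disjoint hd).symm
      _ ≤ S.card := Finset.card_le_card
          (Finset.union_subset Finset.inter_subset_left Finset.inter_subset_left)
  rk_mono S T hST :=
    add_le_add (M₁.rk_mono (Finset.inter_subset_inter hST subset_rfl))
      (M₂.rk_mono (Finset.inter_subset_inter hST subset_rfl))
  rk_submod S T := by
    have e1 : ∀ E' : Finset α, (S ∪ T) ∩ E' = (S ∩ E') ∪ (T ∩ E') := by
      intro E'; ext x; simp only [Finset.mem_union, Finset.mem_inter]; tauto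
    have e2 : ∀ E' : Finset α, (S ∩ T) ∩ E' = (S ∩ E') ∩ (T ∩ E') := by
      intro E'; ext x; simp only [Finset.mem_inter]; tauto
    simp only [e1, e2]
    have h1 := M₁.rk_submod (S ∩ M₁.E) (T ∩ M₁.E)
    have h2 := M₂.rk_submod (S ∩ M₂.E) (T ∩ M₂.E)
    omega

/-- The free matroid `U_{n,n}` on a ground set `E` with `|E| = n`. -/
def freeM (E : Finset α) : FinMatroid α where
  E := E
  rk S := (S ∩ E).card
  rk_empty := by simp
  rk_le_card S := Finset.card_le_card Finset.inter_subset_left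
  rk_mono S T h := Finset.card_le_card (Finset.inter_subset_inter h subset_rfl)
  rk_submod S T := by
    have e1 : (S ∪ T) ∩ E = (S ∩ E) ∪ (T ∩ E) := by
      ext x; simp only [Finset.mem_union, Finset.mem_inter]; tauto
    have e2 : (S ∩ T) ∩ E = (S ∩ E) ∩ (T ∩ E) := by
      ext x; simp only [Finset.mem_inter]; tauto
    simp only [e1, e2]
    exact (Finset.card_union_add_card_inter _ _).le

/-- The uniform matroid `U_{r,n}` on a ground set `E` with `|E| = n`. -/
def uniformM (E : Finset α) (r : ℕ) : FinMatroid α where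
  E := E
  rk S := min (S ∩ E).card r
  rk_empty := by simp
  rk_le_card S := le_trans (min_le_left _ _) (Finset.card_le_card Finset.inter_subset_left)
  rk_mono S T h := min_le_min (Finset.card_le_card (Finset.inter_subset_inter h subset_rfl)) le_rfl
  rk_submod S T := by
    have e1 : (S ∪ T) ∩ E = (S ∩ E) ∪ (T ∩ E) := by
      ext x; simp only [Finset.mem_union, Finset.mem_inter]; tauto
    have e2 : (S ∩ T) ∩ E = (S ∩ E) ∩ (T ∩ E) := by
      ext x; simp only [Finset.mem_inter]; tauto
    have h3 := Finset.card_union_add_card_inter (S ∩ E) (T ∩ E)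
    have h4 : (S ∩ E).card ≤ ((S ∩ E) ∪ (T ∩ E)).card :=
      Finset.card_le_card Finset.subset_union_left
    have h5 : (T ∩ E).card ≤ ((S ∩ E) ∪ (T ∩ E)).card :=
      Finset.card_le_card Finset.subset_union_right
    simp only [e1, e2, Nat.min_def]
    split_ifs <;> omega

/-- The closure `cl_M(S)` of a set in a matroid: all ground set elements whose
addition does not increase the rank. -/
def cl (M : FinMatroid α) (S : Finset α) : Finset α :=
  M.E.filter fun x => M.rk (insert x S) = M.rk S

/-- The rank function of the free extension `M + e`. -/
def freeExtRk (M : FinMatroid α) (e : α) (S : Finset α) : ℕ :=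
  if e ∈ S then
    (if M.cl (S.erase e) = M.E then M.rk (S.erase e) else M.rk (S.erase e) + 1)
  else M.rk S

/-- The free extension `M + e`, realized as the truncation of `M ⊕ U_{1,1}`. -/
def freeExtension (M : FinMatroid α) (e : α) (he : e ∉ M.E) : FinMatroid α :=
  truncation (M.directSum (freeM {e}) (Finset.disjoint_singleton_right.mpr he))

/-- Predicate expressing that `Z` is the (combinatorial) topological zeta function:
`Z` of the trivial matroid is `1` and `Z` satisfies the defining recurrence
`Z_M(s) = (1/(|E|s + rk M)) ∑_{F proper flat} χ̄_{M/F}(1) ⬝ Z_{M|F}(s)`. -/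
def IsTopZeta (Z : FinMatroid α → RatFunc ℚ) : Prop :=
  (∀ M : FinMatroid α, M.E = ∅ → Z M = 1) ∧
  (∀ M : FinMatroid α, M.E.Nonempty →
    Z M = (∑ F ∈ M.properFlats,
        RatFunc.C (M.redCharContractOne F) * Z (M.restrict F)) /
      ((M.E.card : RatFunc ℚ) * RatFunc.X + (M.rk M.E : RatFunc ℚ)))

/-- Predicate expressing that `μ M F` is the Möbius function value `μ(F, E)` in the
lattice of flats of `M`: for every flat `F`, `∑_{G flat, F ⊆ G} μ(G,E) = δ_{F,E}`. -/
def IsFlatMobius (μ : FinMatroid α → Finset α → ℤ) : Prop :=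
  ∀ (M : FinMatroid α) (F : Finset α), M.IsFlat F →
    (∑ G ∈ M.flats.filter fun G => F ⊆ G, μ M G) = if F = M.E then 1 else 0

/-- Predicate expressing that `Y` is the Möbius inversion of `Z`:
`Y_M(s) = ∑_{F ∈ L(M)} μ(F,E) Z_{M|F}(s)`. -/
def IsMobiusInv (μ : FinMatroid α → Finset α → ℤ)
    (Z Y : FinMatroid α → RatFunc ℚ) : Prop :=
  ∀ M : FinMatroid α, Y M = ∑ F ∈ M.flats, (μ M F : RatFunc ℚ) * Z (M.restrict F)

/-- Predicate expressing that `Z` is the topological zeta function, viewed as an actual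
function `ℝ → ℝ` (away from poles): base case `1` for the trivial matroid, and the
defining recurrence pointwise. -/
def IsTopZetaFun (Z : FinMatroid α → ℝ → ℝ) : Prop :=
  (∀ M : FinMatroid α, M.E = ∅ → Z M = fun _ => 1) ∧
  (∀ M : FinMatroid α, M.E.Nonempty → ∀ s : ℝ,
    Z M s = (∑ F ∈ M.properFlats, (M.redCharContractOne F : ℝ) * Z (M.restrict F) s) /
      ((M.E.card : ℝ) * s + (M.rk M.E : ℝ)))

end FinMatroid

namespace FinMatroid

section Helpers

variable {α : Type*} [DecidableEq α]

/-- Alternating sum over subsets. -/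
noncomputable def altSum (D : Finset α) (f : Finset α → ℚ) : ℚ :=
  ∑ S ∈ D.powerset, (-1 : ℚ) ^ S.card * f S

lemma altSum_congr {D : Finset α} {f g : Finset α → ℚ} (h : ∀ S ⊆ D, f S = g S) :
    altSum D f = altSum D g :=
  Finset.sum_congr rfl fun S hS => by rw [h S (Finset.mem_powerset.1 hS)]

lemma altSum_sub (D : Finset α) (f g : Finset α → ℚ) :
    altSum D (fun S => f S - g S) = altSum D f - altSum D g := by
  simp [altSum, mul_sub, Finset.sum_sub_distrib]

lemma altSum_one (D : Finset α) : altSum D (fun _ => 1) = if D = ∅ then 1 else 0 := by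
  have h := congrArg (Int.cast : ℤ → ℚ) (Finset.sum_powerset_neg_one_pow_card (x := D))
  simp only [altSum, mul_one]
  push_cast at h
  exact h

lemma altSum_const {D : Finset α} (hD : D ≠ ∅) (c : ℚ) : altSum D (fun _ => c) = 0 := by
  have := altSum_one D
  simp only [altSum, mul_one, hD, if_false] at this
  simp [altSum, ← Finset.sum_mul, this]

lemma altSum_insert {D : Finset α} {e : α} (he : e ∉ D) (f : Finset α → ℚ) :
    altSum (insert e D) f = altSum D (fun S => f S - f (insert e S)) := by
  rw [altSum_sub]
  simp only [altSum]
  rw [Finset.sum_powerset_insert he, sub_eq_add_neg, ← Finset.sum_neg_distrib]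
  congr 1
  refine Finset.sum_congr rfl fun S hS => ?_
  rw [Finset.card_insert_of_notMem fun h => he (Finset.mem_powerset.1 hS h)]
  ring

lemma red_eq (M : FinMatroid α) {F : Finset α} (hF : F ⊆ M.E) (hne : F ≠ M.E) :
    M.redCharContractOne F = - altSum (M.E \ F) (fun S => (M.rk (S ∪ F) : ℚ)) := by
  have hD : M.E \ F ≠ ∅ := by
    intro h
    exact hne (Finset.Subset.antisymm hF (Finset.sdiff_eq_empty_iff_subset.1 h))
  set p := M.contractCharPoly F with hp
  have hp1 : p.eval 1 = 0 := by
    have := altSum_const hD 1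
    simpa [hp, contractCharPoly, charPolyAux, eval_finsetSum, altSum] using this
  have hdiv : (X - C 1) * (p /ₘ (X - C 1)) = p := mul_divByMonic_eq_iff_isRoot.2 hp1
  have hder : (derivative p).eval 1 = (p /ₘ (X - C 1)).eval 1 := by
    conv_lhs => rw [← hdiv]
    simp [derivative_mul]
  rw [redCharContractOne, reducedCharPoly, ← hp, ← hder]
  have h2 : (derivative p).eval 1 =
      altSum (M.E \ F) (fun S => (M.rk M.E : ℚ) - (M.rk (S ∪ F) : ℚ)) := by
    simp only [hp, contractCharPoly, charPolyAux, derivative_sum, eval_finsetSum, altSum]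
    refine Finset.sum_congr rfl fun S hS => ?_
    have hS' : S ∪ F ⊆ M.E :=
      Finset.union_subset ((Finset.mem_powerset.1 hS).trans Finset.sdiff_subset) hF
    have e0 : M.E \ F ∪ F = M.E := Finset.sdiff_union_of_subset hF
    have h1 : M.rk (S ∪ F) ≤ M.rk M.E := M.rk_mono hS'
    have h3 : M.rk F ≤ M.rk (S ∪ F) := M.rk_mono Finset.subset_union_right
    have e1 : M.rk (M.E \ F ∪ F) - M.rk F - (M.rk (S ∪ F) - M.rk F)
        = M.rk M.E - M.rk (S ∪ F) := by rw [e0]; omega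
    have e2 : ((-1 : Polynomial ℚ) ^ S.card) = C ((-1 : ℚ) ^ S.card) := by simp
    rw [e1, e2, derivative_C_mul, derivative_X_pow]
    simp [Nat.cast_sub h1]
  rw [h2, altSum_sub, altSum_const hD, zero_sub]


lemma mem_flats {M : FinMatroid α} {F : Finset α} : F ∈ M.flats ↔ M.IsFlat F := by
  simp only [flats, Finset.mem_filter, Finset.mem_powerset]
  exact ⟨fun h => h.2, fun h => ⟨h.1, h⟩⟩

lemma mem_properFlats {M : FinMatroid α} {F : Finset α} :
    F ∈ M.properFlats ↔ M.IsFlat F ∧ F ≠ M.E := by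
  simp only [properFlats, Finset.mem_filter, mem_flats]

lemma isFlat_E (M : FinMatroid α) : M.IsFlat M.E := ⟨subset_rfl, fun _ h h' => absurd h h'⟩

lemma rk_union_of_subset_cl (M : FinMatroid α) (A B : Finset α) (h : B ⊆ M.cl A) :
    M.rk (B ∪ A) = M.rk A := by
  induction B using Finset.induction_on with
  | empty => simp
  | insert x B hx ih =>
    have ih' := ih ((Finset.subset_insert _ _).trans h)
    have hx' : M.rk (insert x A) = M.rk A :=
      (Finset.mem_filter.1 (h (Finset.mem_insert_self _ _))).2
    have h1 := M.rk_submod (B ∪ A) (insert x A)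
    have h2 : M.rk A ≤ M.rk ((B ∪ A) ∩ insert x A) :=
      M.rk_mono (Finset.subset_inter Finset.subset_union_right (Finset.subset_insert _ _))
    have h3 : M.rk A ≤ M.rk (insert x B ∪ A) := M.rk_mono Finset.subset_union_right
    have h4 : insert x B ∪ A = (B ∪ A) ∪ insert x A := by
      ext y; simp only [Finset.mem_union, Finset.mem_insert]; tauto
    rw [← h4] at h1
    omega

lemma subset_cl (M : FinMatroid α) {A : Finset α} (hA : A ⊆ M.E) : A ⊆ M.cl A := by
  intro x hx
  exact Finset.mem_filter.2 ⟨hA hx, by rw [Finset.insert_eq_of_mem hx]⟩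

lemma rk_cl (M : FinMatroid α) {A : Finset α} (hA : A ⊆ M.E) : M.rk (M.cl A) = M.rk A := by
  have := M.rk_union_of_subset_cl A (M.cl A) subset_rfl
  rwa [Finset.union_eq_left.2 (M.subset_cl hA)] at this

lemma isFlat_cl (M : FinMatroid α) {A : Finset α} (hA : A ⊆ M.E) : M.IsFlat (M.cl A) := by
  refine ⟨Finset.filter_subset _ _, fun x hx hn => ?_⟩
  rw [M.rk_cl hA]
  have h1 : M.rk (insert x A) ≤ M.rk (insert x (M.cl A)) :=
    M.rk_mono (Finset.insert_subset_insert _ (M.subset_cl hA))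
  have h2 : M.rk A ≤ M.rk (insert x A) := M.rk_mono (Finset.subset_insert _ _)
  have h3 : M.rk (insert x A) ≠ M.rk A := fun h => hn (Finset.mem_filter.2 ⟨hx, h⟩)
  omega

lemma cl_subset_flat (M : FinMatroid α) {A G : Finset α} (hG : M.IsFlat G) (h : A ⊆ G) :
    M.cl A ⊆ G := by
  intro x hx
  obtain ⟨hxE, hx⟩ := Finset.mem_filter.1 hx
  by_contra hn
  have h0 := hG.2 x hxE hn
  have h1 := M.rk_submod G (insert x A)
  have h2 : M.rk A ≤ M.rk (G ∩ insert x A) :=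
    M.rk_mono (Finset.subset_inter h (Finset.subset_insert _ _))
  have h4 : G ∪ insert x A = insert x G := by
    ext y; simp only [Finset.mem_union, Finset.mem_insert]
    have := @h y
    tauto
  rw [h4] at h1
  omega

lemma rk_lt_of_properFlat (M : FinMatroid α) {F : Finset α} (hF : M.IsFlat F) (hne : F ≠ M.E) :
    M.rk F < M.rk M.E := by
  obtain ⟨x, hx, hxF⟩ : ∃ x ∈ M.E, x ∉ F := by
    by_contra! h
    exact hne (Finset.Subset.antisymm hF.1 h)
  exact (hF.2 x hx hxF).trans_le (M.rk_mono (Finset.insert_subset hx hF.1))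

lemma cl_eq_E_iff (M : FinMatroid α) {A : Finset α} (hA : A ⊆ M.E) :
    M.cl A = M.E ↔ M.rk A = M.rk M.E := by
  constructor
  · intro h
    rw [← M.rk_cl hA, h]
  · intro h
    by_contra hne
    have := M.rk_lt_of_properFlat (M.isFlat_cl hA) hne
    rw [M.rk_cl hA] at this
    omega

lemma sum_mobius (M : FinMatroid α) {μ : FinMatroid α → Finset α → ℤ} (hμ : IsFlatMobius μ)
    {A : Finset α} (hA : A ⊆ M.E) :
    (∑ G ∈ M.flats.filter fun G => A ⊆ G, μ M G) = if M.rk A = M.rk M.E then 1 else 0 := by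
  have h := hμ M (M.cl A) (M.isFlat_cl hA)
  simp only [M.cl_eq_E_iff hA] at h
  rw [← h]
  refine Finset.sum_congr ?_ fun _ _ => rfl
  ext G
  simp only [Finset.mem_filter, mem_flats]
  refine and_congr_right fun hG => ⟨fun h => M.cl_subset_flat hG h, fun h => (M.subset_cl hA).trans h⟩

lemma crosscut (M : FinMatroid α) {μ : FinMatroid α → Finset α → ℤ} (hμ : IsFlatMobius μ)
    {F : Finset α} (hF : M.IsFlat F) :
    altSum (M.E \ F) (fun S => if M.rk (S ∪ F) = M.rk M.E then (1 : ℚ) else 0) = (μ M F : ℚ) := by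
  have h1 : altSum (M.E \ F) (fun S => if M.rk (S ∪ F) = M.rk M.E then (1 : ℚ) else 0)
      = altSum (M.E \ F) (fun S => ∑ G ∈ M.flats, if S ∪ F ⊆ G then (μ M G : ℚ) else 0) := by
    refine altSum_congr fun S hS => ?_
    have hS' : S ∪ F ⊆ M.E := Finset.union_subset (hS.trans Finset.sdiff_subset) hF.1
    have := congrArg (Int.cast : ℤ → ℚ) (M.sum_mobius hμ hS')
    push_cast at this
    rw [← this, Finset.sum_filter]
  rw [h1]
  simp only [altSum, Finset.mul_sum]
  rw [Finset.sum_comm]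
  rw [Finset.sum_eq_single_of_mem F (mem_flats.2 hF)]
  · rw [Finset.sum_eq_single_of_mem ∅ (Finset.empty_mem_powerset _)]
    · simp
    · intro S hS hne
      rw [if_neg, mul_zero]
      intro h
      apply hne
      rw [Finset.eq_empty_iff_forall_notMem]
      intro x hx
      exact (Finset.mem_sdiff.1 (Finset.mem_powerset.1 hS hx)).2
        (h (Finset.mem_union_left _ hx))
  · intro G hG hne
    have hG := mem_flats.1 hG
    by_cases hFG : F ⊆ G
    · have hD : G \ F ≠ ∅ := by
        intro h
        exact hne (Finset.Subset.antisymm (Finset.sdiff_eq_empty_iff_subset.1 h) hFG)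
      have h2 := altSum_const hD (μ M G : ℚ)
      refine Eq.trans ?_ h2
      rw [altSum]
      have hsub : (G \ F).powerset ⊆ (M.E \ F).powerset :=
        Finset.powerset_mono.2 (Finset.sdiff_subset_sdiff hG.1 subset_rfl)
      rw [← Finset.sum_subset hsub]
      · refine Finset.sum_congr rfl fun S hS => ?_
        rw [if_pos (Finset.union_subset ((Finset.mem_powerset.1 hS).trans Finset.sdiff_subset) hFG)]
      · intro S hS hn
        rw [if_neg, mul_zero]
        intro h
        apply hn
        rw [Finset.mem_powerset]
        intro x hx
        exact Finset.mem_sdiff.2 ⟨h (Finset.mem_union_left _ hx),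
          (Finset.mem_sdiff.1 (Finset.mem_powerset.1 hS hx)).2⟩
    · refine Finset.sum_eq_zero fun S _ => ?_
      rw [if_neg fun h => hFG (Finset.subset_union_right.trans h), mul_zero]


lemma isFlat_congr {M N : FinMatroid α} (hE : M.E = N.E) (hr : ∀ S ⊆ M.E, M.rk S = N.rk S)
    (F : Finset α) : M.IsFlat F ↔ N.IsFlat F := by
  unfold IsFlat
  rw [← hE]
  refine and_congr_right fun hF => ?_
  refine forall_congr' fun x => forall_congr' fun hx => ?_
  rw [hr F hF, hr _ (Finset.insert_subset hx hF)]

lemma Z_congr {Z : FinMatroid α → RatFunc ℚ} (hZ : IsTopZeta Z) :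
    ∀ (n : ℕ) (M N : FinMatroid α), M.E.card = n → M.E = N.E →
      (∀ S ⊆ M.E, M.rk S = N.rk S) → Z M = Z N := by
  intro n
  induction n using Nat.strong_induction_on with
  | _ n ih =>
    intro M N hn hE hr
    rcases M.E.eq_empty_or_nonempty with h0 | h0
    · rw [hZ.1 M h0, hZ.1 N (hE ▸ h0)]
    · rw [hZ.2 M h0, hZ.2 N (hE ▸ h0), ← hE, ← hr _ subset_rfl]
      congr 1
      have hpf : M.properFlats = N.properFlats := by
        ext F
        rw [mem_properFlats, mem_properFlats, isFlat_congr hE hr, hE]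
      rw [← hpf]
      refine Finset.sum_congr rfl fun F hF => ?_
      obtain ⟨hF, hne⟩ := mem_properFlats.1 hF
      have hss : F ⊂ M.E := Finset.ssubset_iff_subset_ne.2 ⟨hF.1, hne⟩
      rw [ih F.card (hn ▸ Finset.card_lt_card hss) (M.restrict F) (N.restrict F) rfl rfl
        (fun S hS => hr S (Finset.Subset.trans hS hF.1))]
      rw [red_eq M hF.1 hne, red_eq N (hE ▸ hF.1) (hE ▸ hne), ← hE]
      congr 3
      refine altSum_congr fun S hS => ?_
      rw [hr _ (Finset.union_subset (hS.trans Finset.sdiff_subset) hF.1)]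

lemma den_ne (n r : ℕ) (h : n ≠ 0) : ((n : RatFunc ℚ) * RatFunc.X + (r : RatFunc ℚ)) ≠ 0 := by
  have : ((n : RatFunc ℚ) * RatFunc.X + (r : RatFunc ℚ))
      = algebraMap ℚ[X] (RatFunc ℚ) (C (n : ℚ) * X + C (r : ℚ)) := by simp
  rw [this]
  intro h0
  have h1 := (map_eq_zero_iff _ (RatFunc.algebraMap_injective ℚ)).1 h0
  have h2 := congrArg (fun p => coeff p 1) h1
  simp at h2
  exact h h2

lemma Z_rec {Z : FinMatroid α → RatFunc ℚ} (hZ : IsTopZeta Z) (M : FinMatroid α)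
    (h : M.E.Nonempty) :
    ((M.E.card : RatFunc ℚ) * RatFunc.X + (M.rk M.E : RatFunc ℚ)) * Z M =
      ∑ F ∈ M.properFlats, RatFunc.C (M.redCharContractOne F) * Z (M.restrict F) := by
  rw [hZ.2 M h, mul_div_cancel₀ _ (den_ne _ _ h.card_pos.ne')]

lemma sum_properFlats_insert (N : FinMatroid α) (E : Finset α) (e : α) (he : e ∉ E)
    (hE : N.E = insert e E) (f : Finset α → RatFunc ℚ) :
    ∑ F ∈ N.properFlats, f F =
      ∑ F ∈ E.powerset.filter (fun F => N.IsFlat F), f F +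
      ∑ F ∈ E.powerset.filter (fun F => N.IsFlat (insert e F) ∧ F ≠ E), f (insert e F) := by
  have h0 : N.properFlats = (insert e E).powerset.filter (fun F => N.IsFlat F ∧ F ≠ N.E) := by
    ext F
    rw [mem_properFlats, Finset.mem_filter, Finset.mem_powerset, ← hE]
    exact ⟨fun h => ⟨h.1.1, h⟩, fun h => h.2⟩
  rw [h0, Finset.sum_filter, Finset.sum_powerset_insert he, Finset.sum_filter, Finset.sum_filter]
  congr 1
  · refine Finset.sum_congr rfl fun F hF => ?_
    have : F ≠ N.E := by
      rintro rfl
      exact he (Finset.mem_powerset.1 hF (hE ▸ Finset.mem_insert_self _ _))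
    simp [this]
  · refine Finset.sum_congr rfl fun F hF => ?_
    have hF' : e ∉ F := fun h => he (Finset.mem_powerset.1 hF h)
    have : insert e F = N.E ↔ F = E := by
      rw [hE]
      constructor
      · intro h
        rw [← Finset.erase_insert hF', h, Finset.erase_insert he]
      · rintro rfl; rfl
    simp [this]

/-- values of the reduced char poly for one-element extensions -/
lemma red_ext_low (N : FinMatroid α) (E : Finset α) (e : α) (he : e ∉ E)
    (hE : N.E = insert e E) {F : Finset α} (hF : F ⊆ E) :
    N.redCharContractOne F =
      altSum (E \ F) (fun S => (N.rk (insert e (S ∪ F)) : ℚ) - N.rk (S ∪ F)) := by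
  have heF : e ∉ F := fun h => he (hF h)
  rw [red_eq N (hE ▸ hF.trans (Finset.subset_insert _ _))
    (by rintro rfl; exact heF (hE ▸ Finset.mem_insert_self _ _)), hE,
    Finset.insert_sdiff_of_notMem _ heF,
    altSum_insert (fun h => he (Finset.mem_sdiff.1 h).1), altSum_sub, altSum_sub, neg_sub]
  simp only [Finset.insert_union]

lemma red_ext_high (N : FinMatroid α) (E : Finset α) (e : α) (he : e ∉ E)
    (hE : N.E = insert e E) {F : Finset α} (hF : F ⊆ E) (hne : F ≠ E) :
    N.redCharContractOne (insert e F) =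
      - altSum (E \ F) (fun S => (N.rk (insert e (S ∪ F)) : ℚ)) := by
  have heF : e ∉ F := fun h => he (hF h)
  have h1 : N.E \ insert e F = E \ F := by
    rw [hE]; ext x; simp only [Finset.mem_sdiff, Finset.mem_insert]
    by_cases hx : x = e
    · subst hx; simp [he]
    · simp [hx]
  rw [red_eq N (hE ▸ Finset.insert_subset_insert _ hF), h1]
  · simp only [Finset.union_insert]
  · intro h
    rw [hE] at h
    apply hne
    rw [← Finset.erase_insert heF, h, Finset.erase_insert he]

lemma X_add_one_ne : (RatFunc.X + 1 : RatFunc ℚ) ≠ 0 := by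
  simpa using den_ne 1 1 one_ne_zero

lemma sdiff_ne {E F : Finset α} (hF : F ⊆ E) (hne : F ≠ E) : E \ F ≠ ∅ := fun h =>
  hne (Finset.Subset.antisymm hF (Finset.sdiff_eq_empty_iff_subset.1 h))

lemma Z_coloop {Z : FinMatroid α → RatFunc ℚ} (hZ : IsTopZeta Z) (e : α) :
    ∀ (n : ℕ) (M N : FinMatroid α), M.E.card = n → e ∉ M.E → N.E = insert e M.E →
      (∀ S ⊆ M.E, N.rk S = M.rk S) → (∀ S ⊆ M.E, N.rk (insert e S) = M.rk S + 1) →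
      (RatFunc.X + 1) * Z N = Z M := by
  intro n
  induction n using Nat.strong_induction_on with
  | _ n ih =>
    intro M N hn he hE hr hr'
    have hrec := Z_rec hZ N (hE ▸ Finset.insert_nonempty _ _)
    rw [sum_properFlats_insert N M.E e he hE] at hrec
    have hlow : ∑ F ∈ M.E.powerset.filter (fun F => N.IsFlat F),
        RatFunc.C (N.redCharContractOne F) * Z (N.restrict F) = Z M := by
      have hEf : N.IsFlat M.E := by
        refine ⟨hE ▸ Finset.subset_insert _ _, fun x hx hxn => ?_⟩
        rw [hE, Finset.mem_insert] at hx
        obtain rfl := hx.resolve_right hxn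
        rw [hr _ subset_rfl, hr' _ subset_rfl]; omega
      have hval : ∀ F ⊆ M.E, N.redCharContractOne F = if F = M.E then 1 else 0 := by
        intro F hF
        rw [red_ext_low N M.E e he hE hF]
        have : altSum (M.E \ F) (fun S => (N.rk (insert e (S ∪ F)) : ℚ) - N.rk (S ∪ F))
            = altSum (M.E \ F) (fun _ => 1) := by
          refine altSum_congr fun S hS => ?_
          have hS' := Finset.union_subset (hS.trans Finset.sdiff_subset) hF
          rw [hr _ hS', hr' _ hS']; push_cast; ring
        rw [this, altSum_one]
        refine if_congr ?_ rfl rfl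
        rw [Finset.sdiff_eq_empty_iff_subset]
        exact ⟨fun h => Finset.Subset.antisymm hF h, fun h => h ▸ subset_rfl⟩
      rw [Finset.sum_eq_single_of_mem M.E
        (Finset.mem_filter.2 ⟨Finset.mem_powerset_self _, hEf⟩)]
      · rw [hval _ subset_rfl, if_pos rfl, map_one, one_mul]
        exact Z_congr hZ _ _ _ rfl rfl hr
      · intro F hF hne
        rw [hval _ (Finset.mem_powerset.1 (Finset.mem_filter.1 hF).1), if_neg hne, map_zero,
          zero_mul]
    have hhigh : (RatFunc.X + 1) *
        ∑ F ∈ M.E.powerset.filter (fun F => N.IsFlat (insert e F) ∧ F ≠ M.E),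
          RatFunc.C (N.redCharContractOne (insert e F)) * Z (N.restrict (insert e F)) =
        ((M.E.card : RatFunc ℚ) * RatFunc.X + (M.rk M.E : RatFunc ℚ)) * Z M := by
      rcases M.E.eq_empty_or_nonempty with h0 | h0
      · have : M.E.powerset.filter (fun F => N.IsFlat (insert e F) ∧ F ≠ M.E) = ∅ := by
          rw [Finset.filter_eq_empty_iff]
          intro F hF h
          rw [h0] at hF h
          exact h.2 (by simpa using hF)
        rw [this, h0, M.rk_empty]; simp
      · rw [Z_rec hZ M h0, Finset.mul_sum]
        have hset : M.E.powerset.filter (fun F => N.IsFlat (insert e F) ∧ F ≠ M.E)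
            = M.properFlats := by
          ext F
          rw [mem_properFlats, Finset.mem_filter, Finset.mem_powerset, ← and_assoc]
          refine and_congr_left fun hne => ?_
          unfold IsFlat
          refine and_congr_right fun hF => ?_
          rw [hE]
          constructor
          · rintro ⟨-, h⟩ x hx hxF
            have := h x (Finset.mem_insert_of_mem hx) (by
              rw [Finset.mem_insert]; rintro (rfl | h)
              · exact he hx
              · exact hxF h)
            rw [Finset.insert_comm, hr' _ hF, hr' _ (Finset.insert_subset hx hF)] at this
            omega
          · intro h
            refine ⟨Finset.insert_subset_insert _ hF, fun x hx hxF => ?_⟩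
            rw [Finset.mem_insert, not_or] at hxF
            have hx := (Finset.mem_insert.1 hx).resolve_left hxF.1
            rw [Finset.insert_comm, hr' _ hF, hr' _ (Finset.insert_subset hx hF)]
            have := h x hx hxF.2
            omega
        rw [hset]
        refine Finset.sum_congr rfl fun F hF => ?_
        obtain ⟨hF, hne⟩ := mem_properFlats.1 hF
        have hss : F ⊂ M.E := Finset.ssubset_iff_subset_ne.2 ⟨hF.1, hne⟩
        have hih := ih F.card (hn ▸ Finset.card_lt_card hss) (M.restrict F)
          (N.restrict (insert e F)) rfl (fun h => he (hF.1 h)) rfl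
          (fun S hS => hr S (Finset.Subset.trans hS hF.1))
          (fun S hS => hr' S (Finset.Subset.trans hS hF.1))
        have hred : N.redCharContractOne (insert e F) = M.redCharContractOne F := by
          rw [red_ext_high N M.E e he hE hF.1 hne, red_eq M hF.1 hne]
          have : altSum (M.E \ F) (fun S => (N.rk (insert e (S ∪ F)) : ℚ))
            = altSum (M.E \ F) (fun S => (M.rk (S ∪ F) : ℚ) - (-1)) := by
            refine altSum_congr fun S hS => ?_
            rw [hr' _ (Finset.union_subset (hS.trans Finset.sdiff_subset) hF.1)]; push_cast; ring
          rw [this, altSum_sub, altSum_const (sdiff_ne hF.1 hne), sub_zero]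
        rw [← hih, hred]; ring
    rw [hlow] at hrec
    have hd := den_ne (M.E.card + 1) (M.rk M.E + 1) (by omega)
    rw [hE, Finset.card_insert_of_notMem he, hr' _ subset_rfl] at hrec
    apply mul_left_cancel₀ hd
    calc _ = (RatFunc.X + 1) * (((M.E.card + 1 : ℕ) : RatFunc ℚ) * RatFunc.X
          + ((M.rk M.E + 1 : ℕ) : RatFunc ℚ)) * Z N := by ring
      _ = _ := by
        rw [mul_assoc, hrec, mul_add, hhigh]; push_cast; ring

end Helpers

end FinMatroid

open FinMatroid in
/-- `Z_{M+e}(s) = (1/(s+1)) (Z_M(s) - s/((|E|+1)s + rk M) ⬝ Y_M(s))`. -/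
theorem topZeta_freeExtension {α : Type*} [DecidableEq α]
    (Z Y : FinMatroid α → RatFunc ℚ) (μ : FinMatroid α → Finset α → ℤ)
    (hZ : IsTopZeta Z) (hμ : IsFlatMobius μ) (hY : IsMobiusInv μ Z Y)
    (M : FinMatroid α) (hL : M.Loopless) (e : α) (he : e ∉ M.E) :
    Z (M.freeExtension e he) = (1 / (RatFunc.X + 1)) *
      (Z M - RatFunc.X /
          (((M.E.card + 1 : ℕ) : RatFunc ℚ) * RatFunc.X + (M.rk M.E : RatFunc ℚ)) * Y M) := by
  set T := M.freeExtension e he with hT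
  have hE : T.E = insert e M.E := by
    ext x
    simp [hT, freeExtension, truncation, directSum, freeM, or_comm]
  have hrk0 : ∀ S, T.rk S = min (M.rk (S ∩ M.E) + (S ∩ {e}).card) (M.rk M.E) := by
    intro S
    simp [hT, freeExtension, truncation, directSum, freeM, Finset.union_inter_distrib_right,
      Finset.inter_assoc, he]
  have hr : ∀ S ⊆ M.E, T.rk S = M.rk S := by
    intro S hS
    rw [hrk0, Finset.inter_eq_left.2 hS, Finset.inter_singleton_of_notMem fun h => he (hS h)]
    simpa using M.rk_mono hS
  have hr' : ∀ S ⊆ M.E, T.rk (insert e S) = min (M.rk S + 1) (M.rk M.E) := by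
    intro S hS
    rw [hrk0, Finset.insert_inter_of_notMem he, Finset.inter_eq_left.2 hS,
      Finset.inter_singleton_of_mem (Finset.mem_insert_self _ _), Finset.card_singleton]
  have hd := den_ne (M.E.card + 1) (M.rk M.E) (by omega)
  have hX := X_add_one_ne
  have hμE : μ M M.E = 1 := by
    have h := M.sum_mobius hμ (subset_refl M.E)
    rw [if_pos rfl] at h
    rw [← h]
    symm
    refine Finset.sum_eq_single_of_mem M.E (Finset.mem_filter.2 ⟨mem_flats.2 M.isFlat_E, subset_rfl⟩) ?_
    intro G hG hne
    obtain ⟨hG, hEG⟩ := Finset.mem_filter.1 hG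
    exact absurd (Finset.Subset.antisymm (mem_flats.1 hG).1 hEG) hne
  have hYM : Y M = Z M + ∑ F ∈ M.properFlats, (μ M F : RatFunc ℚ) * Z (M.restrict F) := by
    rw [hY M, ← Finset.sum_filter_add_sum_filter_not M.flats (fun F => F = M.E)]
    have h1 : M.flats.filter (fun F => F = M.E) = {M.E} := by
      ext F
      rw [Finset.mem_filter, Finset.mem_singleton, mem_flats]
      exact ⟨fun h => h.2, fun h => ⟨h ▸ M.isFlat_E, h⟩⟩
    rw [h1, Finset.sum_singleton, hμE, Int.cast_one, one_mul]
    rfl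
  have hlowv : ∀ F ∈ M.properFlats, T.redCharContractOne F = -(μ M F : ℚ) := by
    intro F hF
    obtain ⟨hF, hne⟩ := mem_properFlats.1 hF
    rw [red_ext_low T M.E e he hE hF.1, ← M.crosscut hμ hF]
    have : altSum (M.E \ F) (fun S => (T.rk (insert e (S ∪ F)) : ℚ) - T.rk (S ∪ F))
        = altSum (M.E \ F) (fun S => 1 - (if M.rk (S ∪ F) = M.rk M.E then (1 : ℚ) else 0)) := by
      refine altSum_congr fun S hS => ?_
      have hS' := Finset.union_subset (hS.trans Finset.sdiff_subset) hF.1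
      have hle := M.rk_mono hS'
      rw [hr _ hS', hr' _ hS']
      split_ifs with h
      · rw [h, min_eq_right (Nat.le_succ _)]; ring
      · rw [min_eq_left (by omega)]; push_cast; ring
    rw [this, altSum_sub, altSum_const (sdiff_ne hF.1 hne), zero_sub]
  have hhighv : ∀ F ∈ M.properFlats, T.redCharContractOne (insert e F) =
      M.redCharContractOne F + (μ M F : ℚ) := by
    intro F hF
    have hl := hlowv F hF
    obtain ⟨hF, hne⟩ := mem_properFlats.1 hF
    rw [red_ext_low T M.E e he hE hF.1, altSum_sub] at hl
    have : altSum (M.E \ F) (fun S => (T.rk (S ∪ F) : ℚ))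
        = altSum (M.E \ F) (fun S => (M.rk (S ∪ F) : ℚ)) :=
      altSum_congr fun S hS => by
        rw [hr _ (Finset.union_subset (hS.trans Finset.sdiff_subset) hF.1)]
    rw [red_ext_high T M.E e he hE hF.1 hne, red_eq M hF.1 hne]
    linarith
  have hrec := Z_rec hZ T (hE ▸ Finset.insert_nonempty _ _)
  rw [sum_properFlats_insert T M.E e he hE] at hrec
  have hlowset : M.E.powerset.filter (fun F => T.IsFlat F) = M.properFlats := by
    ext F
    rw [mem_properFlats, Finset.mem_filter, Finset.mem_powerset]
    constructor
    · rintro ⟨hF, -, h⟩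
      have h1 := h e (hE ▸ Finset.mem_insert_self _ _) (fun h => he (hF h))
      rw [hr _ hF, hr' _ hF] at h1
      refine ⟨⟨hF, fun x hx hxF => ?_⟩, ?_⟩
      · have := h x (hE ▸ Finset.mem_insert_of_mem hx) hxF
        rwa [hr _ hF, hr _ (Finset.insert_subset hx hF)] at this
      · rintro rfl
        omega
    · rintro ⟨hF, hne⟩
      have hlt := M.rk_lt_of_properFlat hF hne
      refine ⟨hF.1, hE ▸ hF.1.trans (Finset.subset_insert _ _), fun x hx hxF => ?_⟩
      rw [hE, Finset.mem_insert] at hx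
      rcases hx with rfl | hx
      · rw [hr _ hF.1, hr' _ hF.1]; omega
      · rw [hr _ hF.1, hr _ (Finset.insert_subset hx hF.1)]
        exact hF.2 x hx hxF
  have hhighset : M.E.powerset.filter (fun F => T.IsFlat (insert e F) ∧ F ≠ M.E) =
      M.properFlats.filter (fun F => M.rk F + 1 < M.rk M.E) := by
    ext F
    rw [Finset.mem_filter, Finset.mem_filter, mem_properFlats, Finset.mem_powerset]
    constructor
    · rintro ⟨hF, ⟨-, h⟩, hne⟩
      have key : ∀ x ∈ M.E, x ∉ F →
          min (M.rk F + 1) (M.rk M.E) < min (M.rk (insert x F) + 1) (M.rk M.E) := by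
        intro x hx hxF
        have := h x (hE ▸ Finset.mem_insert_of_mem hx) (by
          rw [Finset.mem_insert]; rintro (rfl | h)
          · exact he hx
          · exact hxF h)
        rwa [Finset.insert_comm, hr' _ hF, hr' _ (Finset.insert_subset hx hF)] at this
      refine ⟨⟨⟨hF, fun x hx hxF => ?_⟩, hne⟩, ?_⟩
      · have := key x hx hxF
        omega
      · obtain ⟨x, hx, hxF⟩ : ∃ x ∈ M.E, x ∉ F := by
          by_contra! h
          exact hne (Finset.Subset.antisymm hF h)
        have := key x hx hxF
        omega
    · rintro ⟨⟨hF, hne⟩, hlt⟩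
      refine ⟨hF.1, ⟨hE ▸ Finset.insert_subset_insert _ hF.1, fun x hx hxF => ?_⟩, hne⟩
      rw [Finset.mem_insert, not_or] at hxF
      rw [hE] at hx
      have hx := (Finset.mem_insert.1 hx).resolve_left hxF.1
      rw [Finset.insert_comm, hr' _ hF.1, hr' _ (Finset.insert_subset hx hF.1)]
      have := hF.2 x hx hxF.2
      omega
  rw [hlowset, hhighset, Finset.sum_filter] at hrec
  have hterm : ∀ F ∈ M.properFlats,
      (RatFunc.X + 1) * (if M.rk F + 1 < M.rk M.E then
        RatFunc.C (T.redCharContractOne (insert e F)) * Z (T.restrict (insert e F)) else 0) =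
      RatFunc.C (M.redCharContractOne F + (μ M F : ℚ)) * Z (M.restrict F) := by
    intro F hFm
    rw [← hhighv F hFm]
    obtain ⟨hF, hne⟩ := mem_properFlats.1 hFm
    have hlt := M.rk_lt_of_properFlat hF hne
    split_ifs with h
    · have := Z_coloop hZ e F.card (M.restrict F) (T.restrict (insert e F)) rfl
        (fun h => he (hF.1 h)) rfl (fun S hS => hr S (Finset.Subset.trans hS hF.1))
        (fun S hS => by
          have h1 : T.rk (insert e S) = _ := hr' S (Finset.Subset.trans hS hF.1)
          have h2 : M.rk S ≤ M.rk F := M.rk_mono hS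
          change T.rk (insert e S) = M.rk S + 1
          omega)
      rw [← this]; ring
    · rw [red_ext_high T M.E e he hE hF.1 hne]
      have : altSum (M.E \ F) (fun S => (T.rk (insert e (S ∪ F)) : ℚ))
          = altSum (M.E \ F) (fun _ => (M.rk M.E : ℚ)) := by
        refine altSum_congr fun S hS => ?_
        have hS' := Finset.union_subset (hS.trans Finset.sdiff_subset) hF.1
        have h2 : M.rk F ≤ M.rk (S ∪ F) := M.rk_mono Finset.subset_union_right
        rw [hr' _ hS', min_eq_right (by omega)]
      rw [this, altSum_const (sdiff_ne hF.1 hne)]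
      simp
  have hZM : ((M.E.card : RatFunc ℚ) * RatFunc.X + (M.rk M.E : RatFunc ℚ)) * Z M =
      ∑ F ∈ M.properFlats, RatFunc.C (M.redCharContractOne F) * Z (M.restrict F) := by
    rcases M.E.eq_empty_or_nonempty with h0 | h0
    · have : M.properFlats = ∅ := by
        rw [Finset.eq_empty_iff_forall_notMem]
        intro F hF
        obtain ⟨hF, hne⟩ := mem_properFlats.1 hF
        have := hF.1
        rw [h0] at this hne
        exact hne (Finset.subset_empty.1 this)
      rw [this, h0, M.rk_empty]; simp
    · exact Z_rec hZ M h0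
  rw [hE, Finset.card_insert_of_notMem he, ← hE, show T.rk T.E = M.rk M.E by
    rw [hE, hr' _ subset_rfl, min_eq_right (Nat.le_succ _)]] at hrec
  have hmain : (RatFunc.X + 1) * ((((M.E.card + 1 : ℕ) : RatFunc ℚ) * RatFunc.X
      + (M.rk M.E : RatFunc ℚ)) * Z T) =
      (((M.E.card + 1 : ℕ) : RatFunc ℚ) * RatFunc.X + (M.rk M.E : RatFunc ℚ)) * Z M
        - RatFunc.X * Y M := by
    have hr2 : (((M.E.card + 1 : ℕ) : RatFunc ℚ) * RatFunc.X + (M.rk M.E : RatFunc ℚ)) * Z M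
        - RatFunc.X * Y M = ∑ F ∈ M.properFlats,
          (RatFunc.C (M.redCharContractOne F) - RatFunc.X * (μ M F : RatFunc ℚ))
            * Z (M.restrict F) := by
      simp only [sub_mul, Finset.sum_sub_distrib, mul_assoc]
      rw [← hZM, ← Finset.mul_sum, hYM]
      push_cast
      ring
    rw [hr2, hrec, mul_add, Finset.mul_sum, Finset.mul_sum, ← Finset.sum_add_distrib]
    refine Finset.sum_congr rfl fun F hF => ?_
    have hFE := (mem_properFlats.1 hF).1.1
    have hres : Z (T.restrict F) = Z (M.restrict F) :=
      Z_congr hZ _ _ _ rfl rfl fun S hS => hr S (Finset.Subset.trans hS hFE)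
    rw [hterm F hF, hlowv F hF, hres]
    simp only [map_add, map_neg, map_intCast]
    ring
  generalize ((M.E.card + 1 : ℕ) : RatFunc ℚ) * RatFunc.X + (M.rk M.E : RatFunc ℚ) = d at hd hmain ⊢
  field_simp
  linear_combination hmain
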